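/- Consider the downlink narrowband model with channel H ∈ ℂ^{N_MS × N_BS}, and assume every column submatrix H_T with |T| ≥ N_MS has rank N_MS. Then for any integers n₁, n₂ with N_MS ≤ n₁ < n₂ ≤ N_BS, the maximum sum rate strictly increases: max over subsets T ⊆ {1,…,N_BS} with N_MS ≤ |T| ≤ n₁ of R(T) is strictly less than the maximum of R(T) over subsets T with N_MS ≤ |T| ≤ n₂. -/

import Mathlib

open Matrix

/-! Adding antennas to `T` adds a nonzero positive semidefinite matrix to the Gram matrix
`H_T H_Tᴴ`, because full rank of every `H_T` rules out zero columns. Matrix inversion strictly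
reverses the Loewner order and the trace is strictly monotone for it, so `tr((H_T H_Tᴴ)⁻¹)` strictly
decreases; the power `p_T`, the SINR and the rate then strictly increase. A best set of at most `n₁`
antennas is therefore beaten as soon as one more antenna is added to it. -/

section RankEqCard

variable {m n K : Type*} [Fintype n] [Field K]

theorem linearIndependent_col_of_rank_eq_card {M : Matrix m n K} (hM : M.rank = Fintype.card n) :
    LinearIndependent K M.col := by
  rw [linearIndependent_iff_card_eq_finrank_span, Set.finrank, ← rank_eq_finrank_span_cols, hM]

theorem linearIndependent_row_of_rank_eq_card [Fintype m] {M : Matrix m n K}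
    (hM : M.rank = Fintype.card m) : LinearIndependent K M.row :=
  linearIndependent_col_of_rank_eq_card (M := Mᵀ) (M.rank_transpose.trans hM)

end RankEqCard

section LoewnerOrder

open scoped ComplexOrder MatrixOrder

variable {n 𝕜 : Type*} [Fintype n] [RCLike 𝕜]

theorem trace_strictMono : StrictMono (trace : Matrix n n 𝕜 → 𝕜) := by
  intro A B hAB
  have hdiff : (B - A).PosSemidef := hAB.le
  refine sub_pos.mp ?_
  rw [← trace_sub]
  exact hdiff.trace_nonneg.lt_of_ne' fun h ↦
    hAB.ne' (sub_eq_zero.mp (hdiff.trace_eq_zero_iff.mp h))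

theorem inv_sub_inv_eq_mul_mul_add_mul_mul [DecidableEq n] {R : Type*} [CommRing R]
    {A B : Matrix n n R} (hA : IsUnit A) (hB : IsUnit B) :
    A⁻¹ - B⁻¹ = (A⁻¹ - B⁻¹) * A * (A⁻¹ - B⁻¹) + B⁻¹ * (B - A) * B⁻¹ := by
  rw [isUnit_iff_isUnit_det] at hA hB
  have hAA : A⁻¹ * A = 1 := nonsing_inv_mul A hA
  have hAA' : A * A⁻¹ = 1 := mul_nonsing_inv A hA
  have hBB : B⁻¹ * B = 1 := nonsing_inv_mul B hB
  simp only [sub_mul, mul_sub, hAA, hBB, one_mul, mul_assoc, hAA', mul_one]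
  abel

theorem inv_lt_inv_of_posDef [DecidableEq n] {A B : Matrix n n 𝕜} (hA : A.PosDef) (hAB : A < B) :
    B⁻¹ < A⁻¹ := by
  have hdiff : (B - A).PosSemidef := hAB.le
  have hB : B.PosDef := by simpa only [add_sub_cancel] using hA.add_posSemidef hdiff
  have hle : B⁻¹ ≤ A⁻¹ := by
    have hconj₁ := hA.posSemidef.mul_mul_conjTranspose_same (A⁻¹ - B⁻¹)
    have hconj₂ := hdiff.mul_mul_conjTranspose_same B⁻¹
    rw [(hA.inv.isHermitian.sub hB.inv.isHermitian).eq] at hconj₁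
    rw [hB.inv.isHermitian.eq] at hconj₂
    rw [le_iff, inv_sub_inv_eq_mul_mul_add_mul_mul hA.isUnit hB.isUnit]
    exact hconj₁.add hconj₂
  exact hle.lt_of_ne fun h ↦
    hAB.ne' (inv_inj h ((isUnit_iff_isUnit_det B).mp hB.isUnit))

end LoewnerOrder

section SelectColumns

variable {m n R : Type*}

/-- The submatrix `H_T` of the columns of `H` indexed by `T`, for the channel of a selected set of
antennas. -/
def selectColumns (H : Matrix m n R) (T : Finset n) : Matrix m T R :=
  H.submatrix id (fun t : T ↦ (t : n))

/-- The Gram matrix `H_T H_Tᴴ` of the rows of `H_T`, through which the antenna set `T` enters the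
transmit power. -/
def columnGram [NonUnitalSemiring R] [StarRing R] (H : Matrix m n R) (T : Finset n) :
    Matrix m m R :=
  selectColumns H T * (selectColumns H T)ᴴ

theorem columnGram_eq_sum_vecMulVec [NonUnitalSemiring R] [StarRing R] (H : Matrix m n R)
    (T : Finset n) : columnGram H T = ∑ t ∈ T, vecMulVec (H.col t) (star (H.col t)) := by
  ext i k
  simp only [columnGram, selectColumns, mul_apply, submatrix_apply, conjTranspose_apply, id,
    Matrix.sum_apply, vecMulVec_apply, col_apply, Pi.star_apply]
  exact Finset.sum_coe_sort T fun t ↦ H i t * star (H k t)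

theorem columnGram_sdiff_add_columnGram [DecidableEq n] [NonUnitalSemiring R] [StarRing R]
    (H : Matrix m n R) {S T : Finset n} (hST : S ⊆ T) :
    columnGram H (T \ S) + columnGram H S = columnGram H T := by
  simp only [columnGram_eq_sum_vecMulVec, Finset.sum_sdiff hST]

theorem col_ne_zero_of_rank_selectColumns [Field R] {H : Matrix m n R} {T : Finset n} {j : n}
    (hT : (selectColumns H T).rank = T.card) (hj : j ∈ T) : H.col j ≠ 0 :=
  (linearIndependent_col_of_rank_eq_card
    (hT.trans (Fintype.card_coe T).symm)).ne_zero (⟨j, hj⟩ : T)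

end SelectColumns

section ColumnGramOrder

open scoped ComplexOrder MatrixOrder

variable {m n 𝕜 : Type*} [RCLike 𝕜] {H : Matrix m n 𝕜}

theorem columnGram_posDef [Fintype m] {T : Finset n}
    (hT : (selectColumns H T).rank = Fintype.card m) : (columnGram H T).PosDef :=
  PosDef.mul_conjTranspose_self _
    (vecMul_injective_iff.mpr (linearIndependent_row_of_rank_eq_card hT))

theorem columnGram_strictMono [Finite m] (hcol : ∀ j, H.col j ≠ 0) : StrictMono (columnGram H) := by
  classical
  intro S T hST
  have hadd := columnGram_sdiff_add_columnGram H hST.le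
  obtain ⟨j, hjT, hjS⟩ := Finset.exists_of_ssubset hST
  have hdiff : 0 ≤ columnGram H (T \ S) := (posSemidef_self_mul_conjTranspose _).nonneg
  have hne : columnGram H (T \ S) ≠ 0 := by
    intro h
    have hzero : selectColumns H (T \ S) = 0 := self_mul_conjTranspose_eq_zero.mp h
    exact hcol j (funext fun i ↦ congrFun₂ hzero i ⟨j, Finset.mem_sdiff.mpr ⟨hjT, hjS⟩⟩)
  rw [← hadd]
  exact lt_add_of_pos_left _ (hdiff.lt_of_ne' hne)

end ColumnGramOrder

section QuantizedSINR

/-- The signal-to-interference-plus-noise ratio at received power `p` and unit thermal noise, when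
quantization with gain `α` scales the signal by `α` and adds noise of power `(1 - α) p`. -/
noncomputable def quantizedSINR (α p : ℝ) : ℝ :=
  α * p / (1 + (1 - α) * p)

variable {α : ℝ}

theorem quantizedSINR_nonneg (hα : α ∈ Set.Ioc 0 1) {p : ℝ} (hp : 0 ≤ p) :
    0 ≤ quantizedSINR α p :=
  div_nonneg (mul_nonneg hα.1.le hp)
    (add_nonneg zero_le_one (mul_nonneg (sub_nonneg.mpr hα.2) hp))

theorem quantizedSINR_strictMonoOn (hα : α ∈ Set.Ioc 0 1) :
    StrictMonoOn (quantizedSINR α) (Set.Ici 0) := by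
  intro x hx y hy hxy
  have hdenom_pos {p : ℝ} (hp : 0 ≤ p) : 0 < 1 + (1 - α) * p :=
    add_pos_of_pos_of_nonneg one_pos (mul_nonneg (sub_nonneg.mpr hα.2) hp)
  rw [quantizedSINR, quantizedSINR, div_lt_div_iff₀ (hdenom_pos hx) (hdenom_pos hy)]
  linear_combination mul_lt_mul_of_pos_left hxy hα.1

theorem logb_one_add_quantizedSINR_strictMonoOn {b : ℝ} (hb : 1 < b) (hα : α ∈ Set.Ioc 0 1) :
    StrictMonoOn (fun p ↦ Real.logb b (1 + quantizedSINR α p)) (Set.Ici 0) := by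
  intro x hx y hy hxy
  refine Real.logb_lt_logb hb (add_pos_of_pos_of_nonneg one_pos (quantizedSINR_nonneg hα hx)) ?_
  exact add_lt_add_right (quantizedSINR_strictMonoOn hα hx hy hxy) 1

end QuantizedSINR

section SumRate

open scoped ComplexOrder

variable {m n 𝕜 : Type*} [Fintype m] [DecidableEq m] [RCLike 𝕜]

/-- The zero-forcing transmit power `p_T = P / tr((H_T H_Tᴴ)⁻¹)`, which meets the total power
constraint `P`. The trace is real when `H_T` has full row rank; elsewhere the value is junk. -/
noncomputable def zfPower (H : Matrix m n 𝕜) (P : ℝ) (T : Finset n) : ℝ :=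
  P / RCLike.re (columnGram H T)⁻¹.trace

/-- The zero-forcing downlink sum rate `R(T)` over the antenna set `T`, where `m` indexes the
receive antennas. -/
noncomputable def zfSumRate (H : Matrix m n 𝕜) (P α : ℝ) (T : Finset n) : ℝ :=
  Fintype.card m * Real.logb 2 (1 + quantizedSINR α (zfPower H P T))

variable [Nonempty m] {H : Matrix m n 𝕜} {P α : ℝ}

theorem re_trace_inv_columnGram_pos {T : Finset n}
    (hT : (selectColumns H T).rank = Fintype.card m) :
    0 < RCLike.re (columnGram H T)⁻¹.trace :=
  (RCLike.pos_iff.mp (columnGram_posDef hT).inv.trace_pos).1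

theorem zfPower_pos (hP : 0 < P) {T : Finset n}
    (hT : (selectColumns H T).rank = Fintype.card m) : 0 < zfPower H P T :=
  div_pos hP (re_trace_inv_columnGram_pos hT)

theorem zfPower_lt_zfPower (hP : 0 < P) (hcol : ∀ j, H.col j ≠ 0) {S T : Finset n}
    (hS : (selectColumns H S).rank = Fintype.card m)
    (hT : (selectColumns H T).rank = Fintype.card m) (hST : S ⊂ T) :
    zfPower H P S < zfPower H P T := by
  have htrace : (columnGram H T)⁻¹.trace < (columnGram H S)⁻¹.trace :=
    trace_strictMono (inv_lt_inv_of_posDef (columnGram_posDef hS) (columnGram_strictMono hcol hST))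
  exact div_lt_div_of_pos_left hP (re_trace_inv_columnGram_pos hT) (RCLike.lt_iff_re_im.mp htrace).1

theorem zfSumRate_lt_zfSumRate (hP : 0 < P) (hα : α ∈ Set.Ioc 0 1) (hcol : ∀ j, H.col j ≠ 0)
    {S T : Finset n} (hS : (selectColumns H S).rank = Fintype.card m)
    (hT : (selectColumns H T).rank = Fintype.card m) (hST : S ⊂ T) :
    zfSumRate H P α S < zfSumRate H P α T :=
  mul_lt_mul_of_pos_left
    (logb_one_add_quantizedSINR_strictMonoOn one_lt_two hα (zfPower_pos hP hS).le
      (zfPower_pos hP hT).le (zfPower_lt_zfPower hP hcol hS hT hST))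
    (Nat.cast_pos.mpr Fintype.card_pos)

end SumRate

theorem sSup_image_card_mem_Icc_lt {ι β : Type*} [Fintype ι] [ConditionallyCompleteLinearOrder β]
    {f : Finset ι → β} {k a b : ℕ} (hf : StrictMonoOn f {T | k ≤ T.card}) (hka : k ≤ a)
    (hab : a < b) (hb : b ≤ Fintype.card ι) :
    sSup (f '' {T | T.card ∈ Set.Icc k a}) < sSup (f '' {T | T.card ∈ Set.Icc k b}) := by
  have hne : {T : Finset ι | T.card ∈ Set.Icc k a}.Nonempty := by
    obtain ⟨T, -, hT⟩ := Finset.exists_subset_card_eq (hka.trans (hab.le.trans hb))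
    exact ⟨T, hT.ge, hT.trans_le hka⟩
  obtain ⟨T, ⟨hkT, hTa⟩, hmax⟩ := (hne.image f).csSup_mem (Set.toFinite _)
  have hTuniv : T.card < Fintype.card ι := hTa.trans_lt (hab.trans_le hb)
  obtain ⟨T', hTT', -, hcard⟩ :=
    Finset.exists_subsuperset_card_eq T.subset_univ T.card.le_succ hTuniv
  have hss : T ⊂ T' := hTT'.ssubset_of_ne fun h ↦ by simp [h] at hcard
  have hkT' : k ≤ T'.card := hkT.trans (Finset.card_le_card hTT')
  rw [← hmax]
  exact (hf hkT hkT' hss).trans_le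
    (le_csSup (Set.toFinite _).bddAbove ⟨T', ⟨hkT', by omega⟩, rfl⟩)

theorem stmt3_general {m n 𝕜 : Type*} [Fintype m] [DecidableEq m] [Nonempty m] [Fintype n]
    [RCLike 𝕜] (H : Matrix m n 𝕜) {P α : ℝ} (hP : 0 < P) (hα : α ∈ Set.Ioc 0 1)
    (hrank : ∀ T : Finset n, Fintype.card m ≤ T.card →
      (selectColumns H T).rank = Fintype.card m)
    {n₁ n₂ : ℕ} (h1 : Fintype.card m ≤ n₁) (h12 : n₁ < n₂) (h2 : n₂ ≤ Fintype.card n) :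
    sSup (zfSumRate H P α '' {T | T.card ∈ Set.Icc (Fintype.card m) n₁}) <
      sSup (zfSumRate H P α '' {T | T.card ∈ Set.Icc (Fintype.card m) n₂}) := by
  have hcol (j : n) : H.col j ≠ 0 := by
    obtain ⟨T, hjT, hcard⟩ := Finset.exists_superset_card_eq (s := {j})
      (Finset.card_singleton j ▸ Fintype.card_pos) (h1.trans (h12.le.trans h2))
    exact col_ne_zero_of_rank_selectColumns ((hrank T hcard.ge).trans hcard.symm)
      (Finset.singleton_subset_iff.mp hjT)
  have hmono : StrictMonoOn (zfSumRate H P α) {T | Fintype.card m ≤ T.card} :=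
    fun S hS T hT hST ↦ zfSumRate_lt_zfSumRate hP hα hcol (hrank S hS) (hrank T hT) hST
  exact sSup_image_card_mem_Icc_lt hmono h1 h12 h2

/-- Downlink narrowband model: `H : ℂ^{N_MS × N_BS}` with every column
submatrix `H_T` (for `|T| ≥ N_MS`) of rank `N_MS`.  With `p_T = P / tr((H_T H_Tᴴ)⁻¹)` and
`R T = N_MS log₂(1 + α p_T / (1 + (1-α) p_T))`, for `N_MS ≤ n₁ < n₂ ≤ N_BS` the maximum of `R`
over subsets with `N_MS ≤ |T| ≤ n₁` is strictly smaller than the maximum over subsets with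
`N_MS ≤ |T| ≤ n₂`. -/
theorem stmt3 (N_MS N_BS : ℕ) (hms : 0 < N_MS)
    (H : Matrix (Fin N_MS) (Fin N_BS) ℂ) (P α : ℝ) (hP : 0 < P) (hα : α ∈ Set.Ioo (0 : ℝ) 1)
    (hrank : ∀ T : Finset (Fin N_BS), N_MS ≤ T.card →
      (H.submatrix id (fun t : T => (t : Fin N_BS))).rank = N_MS)
    (p : Finset (Fin N_BS) → ℝ)
    (hp : ∀ T : Finset (Fin N_BS),
      p T = P / ((((H.submatrix id (fun t : T => (t : Fin N_BS))) *
        (H.submatrix id (fun t : T => (t : Fin N_BS)))ᴴ)⁻¹).trace).re)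
    (R : Finset (Fin N_BS) → ℝ)
    (hR : ∀ T : Finset (Fin N_BS),
      R T = (N_MS : ℝ) * Real.logb 2 (1 + α * p T / (1 + (1 - α) * p T)))
    (n₁ n₂ : ℕ) (h1 : N_MS ≤ n₁) (h12 : n₁ < n₂) (h2 : n₂ ≤ N_BS) :
    sSup {x : ℝ | ∃ T : Finset (Fin N_BS), N_MS ≤ T.card ∧ T.card ≤ n₁ ∧ x = R T} <
      sSup {x : ℝ | ∃ T : Finset (Fin N_BS), N_MS ≤ T.card ∧ T.card ≤ n₂ ∧ x = R T} := by
  have : Nonempty (Fin N_MS) := Fin.pos_iff_nonempty.mp hms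
  have hR' : R = zfSumRate H P α := funext fun T ↦ by
    simp [hR, hp, zfSumRate, quantizedSINR, zfPower, columnGram, selectColumns]
  simpa [hR', Set.image, and_assoc, eq_comm] using
    stmt3_general H hP ⟨hα.1, hα.2.le⟩ (by simpa [selectColumns] using hrank)
      (by simpa using h1) h12 (by simpa using h2)
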